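/- arXiv:2402.02291 — 5 statements merged into one kernel-verified Lean document; each statement's English description precedes it below -/
import Mathlib

section
/- Let K and Θ be bounded operators on H with ΘK = KΘ, let S be a Moore–Penrose inverse of Θ, and assume ran(K*) ⊆ ran(Θ). If {Υ_ξ}_{ξ∈Ω} is a continuous K-g-frame for H with bounds A, B, then for every f ∈ H one has A·‖S*‖⁻²·‖K* f‖² ≤ ∫_Ω ‖Υ_ξ Θ* f‖² dν(ξ) ≤ B·‖Θ*‖²·‖f‖²; in particular {Υ_ξ Θ*}_{ξ∈Ω} is a continuous K-g-frame for H. -/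
open MeasureTheory ContinuousLinearMap

noncomputable section

/-- `Υ` is a continuous `K`-g-frame for `H` with bounds `A ≤ B`. -/
def IsCKgFrame {Ω H E : Type*} [MeasurableSpace Ω]
    [NormedAddCommGroup H] [InnerProductSpace ℂ H] [CompleteSpace H]
    [NormedAddCommGroup E] [InnerProductSpace ℂ E]
    (ν : Measure Ω) (K : H →L[ℂ] H) (Υ : Ω → H →L[ℂ] E) (A B : ℝ) : Prop :=
  0 < A ∧ A ≤ B ∧ ∀ h : H,
    Integrable (fun ξ => ‖Υ ξ h‖ ^ 2) ν ∧
    A * ‖adjoint K h‖ ^ 2 ≤ ∫ ξ, ‖Υ ξ h‖ ^ 2 ∂ν ∧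
    ∫ ξ, ‖Υ ξ h‖ ^ 2 ∂ν ≤ B * ‖h‖ ^ 2

/-- `S` is a Moore–Penrose inverse of `Θ`. -/
def IsMoorePenroseInv {H : Type*} [NormedAddCommGroup H] [InnerProductSpace ℂ H]
    [CompleteSpace H] (Θ S : H →L[ℂ] H) : Prop :=
  Θ ∘L S ∘L Θ = Θ ∧ S ∘L Θ ∘L S = S ∧
    adjoint (Θ ∘L S) = Θ ∘L S ∧ adjoint (S ∘L Θ) = S ∘L Θ

/-! Composing the frame with `Θ*` turns a `K`-g-frame into a `ΘK`-g-frame, since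
`(ΘK)* = K*Θ*`; replacing `L` by `LS` costs a factor `‖S‖²` in the lower bound, since
`(LS)* = S*L*`. As `ΘS` is the orthogonal projection onto `ran Θ ⊇ ran K*`, it fixes `K*`, so
`K = KΘS = ΘKS` and the two operations together lead back to a `K`-g-frame. -/

section Adjoint

variable {𝕜 F G M : Type*} [RCLike 𝕜]
  [NormedAddCommGroup F] [InnerProductSpace 𝕜 F]
  [NormedAddCommGroup G] [InnerProductSpace 𝕜 G] [CompleteSpace G]
  [NormedAddCommGroup M] [InnerProductSpace 𝕜 M] [CompleteSpace M]

theorem comp_comp_eq_self_of_range_adjoint_subset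
    {T : F →L[𝕜] G} {S : G →L[𝕜] F} {K : G →L[𝕜] M}
    (hTST : T ∘L S ∘L T = T) (hTS : adjoint (T ∘L S) = T ∘L S)
    (hran : Set.range (adjoint K) ⊆ Set.range T) :
    K ∘L T ∘L S = K := by
  have hfix : (T ∘L S) ∘L adjoint K = adjoint K := by
    ext y
    obtain ⟨x, hx⟩ := hran ⟨y, rfl⟩
    simpa only [comp_apply, hx] using DFunLike.congr_fun hTST x
  simpa only [adjoint_comp (T ∘L S), hTS, adjoint_adjoint] using congrArg adjoint hfix

theorem norm_adjoint_comp_apply_le [CompleteSpace F]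
    (K : G →L[𝕜] M) (S : F →L[𝕜] G) (x : M) :
    ‖adjoint (K ∘L S) x‖ ≤ ‖S‖ * ‖adjoint K x‖ := by
  rw [adjoint_comp, comp_apply, ← adjoint.norm_map S]
  exact le_opNorm _ _

end Adjoint

theorem IsMoorePenroseInv.comp_comp_eq_of_commute {H : Type*} [NormedAddCommGroup H]
    [InnerProductSpace ℂ H] [CompleteSpace H] {K Θ S : H →L[ℂ] H}
    (hMP : IsMoorePenroseInv Θ S) (hcomm : Θ ∘L K = K ∘L Θ)
    (hran : Set.range (adjoint K) ⊆ Set.range Θ) :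
    (Θ ∘L K) ∘L S = K := by
  obtain ⟨hΘSΘ, -, hΘS, -⟩ := hMP
  rw [hcomm]
  exact comp_comp_eq_self_of_range_adjoint_subset hΘSΘ hΘS hran

namespace IsCKgFrame

variable {Ω H E : Type*} [MeasurableSpace Ω]
  [NormedAddCommGroup H] [InnerProductSpace ℂ H] [CompleteSpace H]
  [NormedAddCommGroup E] [InnerProductSpace ℂ E]
  {ν : Measure Ω} {K : H →L[ℂ] H} {Υ : Ω → H →L[ℂ] E} {A B : ℝ}

theorem integral_apply_le (hΥ : IsCKgFrame ν K Υ A B) (T : H →L[ℂ] H) (f : H) :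
    ∫ ξ, ‖Υ ξ (T f)‖ ^ 2 ∂ν ≤ B * ‖T‖ ^ 2 * ‖f‖ ^ 2 := by
  obtain ⟨hA, hAB, hbounds⟩ := hΥ
  have hB : 0 ≤ B := hA.le.trans hAB
  calc ∫ ξ, ‖Υ ξ (T f)‖ ^ 2 ∂ν
      ≤ B * ‖T f‖ ^ 2 := (hbounds (T f)).2.2
    _ ≤ B * (‖T‖ * ‖f‖) ^ 2 := by gcongr; exact le_opNorm T f
    _ = B * ‖T‖ ^ 2 * ‖f‖ ^ 2 := by ring

theorem comp_adjoint (hΥ : IsCKgFrame ν K Υ A B) (Θ : H →L[ℂ] H) :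
    IsCKgFrame ν (Θ ∘L K) (fun ξ => Υ ξ ∘L adjoint Θ) A (max A (B * ‖adjoint Θ‖ ^ 2)) := by
  refine ⟨hΥ.1, le_max_left _ _, fun h => ?_⟩
  obtain ⟨hint, hlower, -⟩ := hΥ.2.2 (adjoint Θ h)
  refine ⟨hint, ?_, (hΥ.integral_apply_le (adjoint Θ) h).trans ?_⟩
  · rwa [adjoint_comp]
  · gcongr
    exact le_max_right _ _

-- The free constant `c` allows `c = ‖S‖ ^ 2` as well as a `c` that stays positive when `S = 0`.
theorem le_integral_of_norm_sq_le (hΥ : IsCKgFrame ν K Υ A B) {S : H →L[ℂ] H} {c : ℝ}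
    (hc : ‖S‖ ^ 2 ≤ c) (f : H) :
    A * c⁻¹ * ‖adjoint (K ∘L S) f‖ ^ 2 ≤ ∫ ξ, ‖Υ ξ f‖ ^ 2 ∂ν := by
  obtain ⟨hA, -, hbounds⟩ := hΥ
  have hc₀ : 0 ≤ c := (sq_nonneg ‖S‖).trans hc
  have hKS : ‖adjoint (K ∘L S) f‖ ^ 2 ≤ c * ‖adjoint K f‖ ^ 2 :=
    calc ‖adjoint (K ∘L S) f‖ ^ 2
        ≤ (‖S‖ * ‖adjoint K f‖) ^ 2 := by gcongr; exact norm_adjoint_comp_apply_le K S f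
      _ = ‖S‖ ^ 2 * ‖adjoint K f‖ ^ 2 := mul_pow _ _ _
      _ ≤ c * ‖adjoint K f‖ ^ 2 := by gcongr
  calc A * c⁻¹ * ‖adjoint (K ∘L S) f‖ ^ 2
      = A * (c⁻¹ * ‖adjoint (K ∘L S) f‖ ^ 2) := mul_assoc _ _ _
    _ ≤ A * ‖adjoint K f‖ ^ 2 := by
        gcongr
        exact inv_mul_le_of_le_mul₀ hc₀ (by positivity) hKS
    _ ≤ ∫ ξ, ‖Υ ξ f‖ ^ 2 ∂ν := (hbounds f).2.1

theorem comp_right (hΥ : IsCKgFrame ν K Υ A B) (S : H →L[ℂ] H) :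
    IsCKgFrame ν (K ∘L S) Υ (A * (max 1 (‖S‖ ^ 2))⁻¹) B := by
  have hA : 0 < A := hΥ.1
  have hA_le : A * (max 1 (‖S‖ ^ 2))⁻¹ ≤ A :=
    mul_le_of_le_one_right hA.le (inv_le_one_of_one_le₀ (le_max_left _ _))
  refine ⟨by positivity, hA_le.trans hΥ.2.1, fun h => ?_⟩
  obtain ⟨hint, -, hupper⟩ := hΥ.2.2 h
  exact ⟨hint, hΥ.le_integral_of_norm_sq_le (le_max_right _ _) h, hupper⟩

end IsCKgFrame

theorem stmt0_general {Ω H E : Type*} [MeasurableSpace Ω]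
    [NormedAddCommGroup H] [InnerProductSpace ℂ H] [CompleteSpace H]
    [NormedAddCommGroup E] [InnerProductSpace ℂ E]
    (ν : Measure Ω) (K Θ S : H →L[ℂ] H) (Υ : Ω → H →L[ℂ] E) (A B : ℝ)
    (hK : (Θ ∘L K) ∘L S = K)
    (hframe : IsCKgFrame ν K Υ A B) :
    (∀ f : H,
      A * (‖adjoint S‖ ^ 2)⁻¹ * ‖adjoint K f‖ ^ 2
          ≤ ∫ ξ, ‖Υ ξ (adjoint Θ f)‖ ^ 2 ∂ν ∧
      ∫ ξ, ‖Υ ξ (adjoint Θ f)‖ ^ 2 ∂ν ≤ B * ‖adjoint Θ‖ ^ 2 * ‖f‖ ^ 2) ∧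
    ∃ A' B' : ℝ, IsCKgFrame ν K (fun ξ => (Υ ξ).comp (adjoint Θ)) A' B' := by
  have hΘK := hframe.comp_adjoint Θ
  refine ⟨fun f => ⟨?_, hframe.integral_apply_le (adjoint Θ) f⟩, _, _, hK ▸ hΘK.comp_right S⟩
  have hlower := hΘK.le_integral_of_norm_sq_le (S := S) le_rfl f
  rwa [hK, ← adjoint.norm_map S] at hlower

theorem stmt0 {Ω H E : Type*} [MeasurableSpace Ω]
    [NormedAddCommGroup H] [InnerProductSpace ℂ H] [CompleteSpace H]
    [NormedAddCommGroup E] [InnerProductSpace ℂ E]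
    (ν : Measure Ω) (K Θ S : H →L[ℂ] H) (Υ : Ω → H →L[ℂ] E) (A B : ℝ)
    (hcomm : Θ ∘L K = K ∘L Θ)
    (hMP : IsMoorePenroseInv Θ S)
    (hran : Set.range ⇑(adjoint K) ⊆ Set.range ⇑Θ)
    (hframe : IsCKgFrame ν K Υ A B) :
    (∀ f : H,
      A * (‖adjoint S‖ ^ 2)⁻¹ * ‖adjoint K f‖ ^ 2
          ≤ ∫ ξ, ‖Υ ξ (adjoint Θ f)‖ ^ 2 ∂ν ∧
      ∫ ξ, ‖Υ ξ (adjoint Θ f)‖ ^ 2 ∂ν ≤ B * ‖adjoint Θ‖ ^ 2 * ‖f‖ ^ 2) ∧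
    ∃ A' B' : ℝ, IsCKgFrame ν K (fun ξ => (Υ ξ).comp (adjoint Θ)) A' B' :=
  stmt0_general ν K Θ S Υ A B (hMP.comp_comp_eq_of_commute hcomm hran) hframe
end
end

section
/- Let K and Θ be bounded operators on H such that K has dense range, Θ has closed range, and ΘK = KΘ. If both {Υ_ξ ∘ Θ}_{ξ∈Ω} and {Υ_ξ ∘ Θ*}_{ξ∈Ω} are continuous K-g-frames for H, then {Υ_ξ}_{ξ∈Ω} is a continuous K-g-frame for H. -/
open MeasureTheory ContinuousLinearMap

noncomputable section

/-!
The lower frame bound of `Υ ∘ Θ` makes `Θ` injective: `Θ h = 0` forces `K* h = 0`, and `K*` is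
injective because `K` has dense range. An injective `Θ` with closed range has a bounded left
inverse `S`. Then `Θ* S* = 1`, so composing the `K`-g-frame `Υ ∘ Θ*` on the right with `S*` recovers
`Υ`, now as an `S K`-g-frame. Since `Θ` commutes with `K`, we have `K = S Θ K = (S K) Θ`, and
replacing `S K` by `(S K) Θ` only costs a factor in the lower bound.
-/

section OperatorLemmas

variable {𝕜 H G : Type*} [RCLike 𝕜] [NormedAddCommGroup H] [InnerProductSpace 𝕜 H]
  [NormedAddCommGroup G] [InnerProductSpace 𝕜 G] [CompleteSpace H] [CompleteSpace G]

lemma injective_adjoint_of_denseRange {T : H →L[𝕜] G} (hT : DenseRange T) :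
    Function.Injective (adjoint T) := by
  refine (injective_iff_map_eq_zero _).2 fun g hg => hT.eq_zero_of_inner_left (𝕜 := 𝕜) fun h => ?_
  rw [← adjoint_inner_left, hg, inner_zero_left]

lemma hasLeftInverse_of_injective_of_isClosed_range {T : H →L[𝕜] G}
    (hinj : Function.Injective T) (hclosed : IsClosed (Set.range T)) : T.HasLeftInverse := by
  have : CompleteSpace T.range := hclosed.completeSpace_coe
  exact .of_injective_of_isClosed_range_of_closedComplement_range hinj hclosed
    ⟨T.range.orthogonalProjectionOnto, T.range.orthogonalProjectionOnto_mem_subspace_eq_self⟩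

end OperatorLemmas

section Frames

variable {Ω H G E : Type*} [MeasurableSpace Ω]
  [NormedAddCommGroup H] [InnerProductSpace ℂ H] [CompleteSpace H]
  [NormedAddCommGroup G] [InnerProductSpace ℂ G] [CompleteSpace G]
  [NormedAddCommGroup E] [InnerProductSpace ℂ E] {ν : Measure Ω}

namespace IsCKgFrame

lemma adjoint_apply_eq_zero {K : H →L[ℂ] H} {Υ : Ω → H →L[ℂ] E} {A B : ℝ}
    (hΥ : IsCKgFrame ν K Υ A B) {h : H} (hzero : ∀ ξ, Υ ξ h = 0) : adjoint K h = 0 := by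
  obtain ⟨hA, -, hbounds⟩ := hΥ
  have hle : A * ‖adjoint K h‖ ^ 2 ≤ 0 := by simpa [hzero] using (hbounds h).2.1
  have hsq : ‖adjoint K h‖ ^ 2 ≤ 0 := nonpos_of_mul_nonpos_right hle hA
  simpa using hsq.antisymm (sq_nonneg _)

lemma injective_of_comp {F : Type*} [NormedAddCommGroup F] [NormedSpace ℂ F]
    {K : H →L[ℂ] H} {Θ : H →L[ℂ] F} {Υ : Ω → F →L[ℂ] E} {A B : ℝ}
    (hΥ : IsCKgFrame ν K (fun ξ => (Υ ξ).comp Θ) A B) (hK : DenseRange K) :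
    Function.Injective Θ := by
  refine (injective_iff_map_eq_zero _).2 fun h hh => ?_
  have hKh : adjoint K h = 0 := hΥ.adjoint_apply_eq_zero fun ξ => by simp [hh]
  exact (injective_iff_map_eq_zero _).1 (injective_adjoint_of_denseRange hK) h hKh

-- Without the summands `1`, `X = 0` would divide by `0`, and for small `T` or `X` the first bound
-- could exceed the second.
lemma comp {K : H →L[ℂ] H} {Υ : Ω → H →L[ℂ] E} {A B : ℝ} (hΥ : IsCKgFrame ν K Υ A B)
    (T X : G →L[ℂ] H) :
    IsCKgFrame ν (adjoint T ∘L K ∘L X) (fun ξ => (Υ ξ).comp T)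
      (A / (‖X‖ ^ 2 + 1)) (B * (‖T‖ ^ 2 + 1)) := by
  obtain ⟨hA, hAB, hbounds⟩ := hΥ
  have hB : 0 < B := hA.trans_le hAB
  refine ⟨by positivity, ?_, fun g => ?_⟩
  · calc A / (‖X‖ ^ 2 + 1) ≤ A := div_le_self hA.le (by simp)
      _ ≤ B := hAB
      _ ≤ B * (‖T‖ ^ 2 + 1) := le_mul_of_one_le_right hB.le (by simp)
  obtain ⟨hint, hlower, hupper⟩ := hbounds (T g)
  refine ⟨hint, le_trans ?_ hlower, hupper.trans ?_⟩
  · have hadjoint : ‖adjoint (adjoint T ∘L K ∘L X) g‖ ≤ ‖X‖ * ‖adjoint K (T g)‖ := by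
      simpa [adjoint_comp] using (adjoint X).le_opNorm (adjoint K (T g))
    calc A / (‖X‖ ^ 2 + 1) * ‖adjoint (adjoint T ∘L K ∘L X) g‖ ^ 2
        ≤ A / (‖X‖ ^ 2 + 1) * (‖X‖ * ‖adjoint K (T g)‖) ^ 2 := by gcongr
      _ = A / (‖X‖ ^ 2 + 1) * (‖X‖ ^ 2 * ‖adjoint K (T g)‖ ^ 2) := by rw [mul_pow]
      _ ≤ A / (‖X‖ ^ 2 + 1) * ((‖X‖ ^ 2 + 1) * ‖adjoint K (T g)‖ ^ 2) := by gcongr; simp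
      _ = A * ‖adjoint K (T g)‖ ^ 2 := by field_simp
  · calc B * ‖T g‖ ^ 2 ≤ B * (‖T‖ * ‖g‖) ^ 2 := by gcongr; exact T.le_opNorm g
      _ = B * ‖T‖ ^ 2 * ‖g‖ ^ 2 := by ring
      _ ≤ B * (‖T‖ ^ 2 + 1) * ‖g‖ ^ 2 := by gcongr; simp

end IsCKgFrame

theorem stmt1_general {K : H →L[ℂ] H} {L : G →L[ℂ] G} {Θ X : H →L[ℂ] G} {Υ : Ω → H →L[ℂ] E}
    (hinj : Function.Injective Θ) (hclosed : IsClosed (Set.range Θ))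
    (hintertwine : Θ ∘L K = L ∘L X)
    (hΥ : ∃ A B : ℝ, IsCKgFrame ν L (fun ξ => (Υ ξ).comp (adjoint Θ)) A B) :
    ∃ A B : ℝ, IsCKgFrame ν K Υ A B := by
  obtain ⟨A, B, hΥ⟩ := hΥ
  obtain ⟨S, hS⟩ := hasLeftInverse_of_injective_of_isClosed_range hinj hclosed
  have hSΘ : S ∘L Θ = .id ℂ H := ContinuousLinearMap.ext hS
  have hK : adjoint (adjoint S) ∘L L ∘L X = K := by
    rw [adjoint_adjoint, ← hintertwine, ← comp_assoc, hSΘ, id_comp]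
  have hadjoint : adjoint Θ ∘L adjoint S = .id ℂ H := by rw [← adjoint_comp, hSΘ, adjoint_id]
  have hframe := hΥ.comp (adjoint S) X
  simp only [hK, comp_assoc, hadjoint, comp_id] at hframe
  exact ⟨_, _, hframe⟩

end Frames

theorem stmt1 {Ω H E : Type*} [MeasurableSpace Ω]
    [NormedAddCommGroup H] [InnerProductSpace ℂ H] [CompleteSpace H]
    [NormedAddCommGroup E] [InnerProductSpace ℂ E]
    (ν : Measure Ω) (K Θ : H →L[ℂ] H) (Υ : Ω → H →L[ℂ] E)
    (hdense : DenseRange ⇑K)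
    (hclosed : IsClosed (Set.range ⇑Θ))
    (hcomm : Θ ∘L K = K ∘L Θ)
    (h1 : ∃ A B : ℝ, IsCKgFrame ν K (fun ξ => (Υ ξ).comp Θ) A B)
    (h2 : ∃ A B : ℝ, IsCKgFrame ν K (fun ξ => (Υ ξ).comp (adjoint Θ)) A B) :
    ∃ A B : ℝ, IsCKgFrame ν K Υ A B := by
  obtain ⟨_, _, hΥΘ⟩ := h1
  exact stmt1_general (hΥΘ.injective_of_comp hdense) hclosed hcomm h2
end
end

section
/- Let K and Θ be bounded operators on H with ΘK = KΘ, let {Υ_ξ}_{ξ∈Ω} be a δ-tight continuous K-g-frame for H (δ > 0), and assume K* is bounded below, i.e. there is m > 0 with ‖K* f‖ ≥ m‖f‖ for all f ∈ H. If Θ is surjective, then {Υ_ξ ∘ Θ*}_{ξ∈Ω} is a continuous K-g-frame for H. -/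
open MeasureTheory ContinuousLinearMap

noncomputable section

/-- `Υ` is a `δ`-tight continuous `K`-g-frame for `H`. -/
def IsTightCKgFrame {Ω H E : Type*} [MeasurableSpace Ω]
    [NormedAddCommGroup H] [InnerProductSpace ℂ H] [CompleteSpace H]
    [NormedAddCommGroup E] [InnerProductSpace ℂ E]
    (ν : Measure Ω) (K : H →L[ℂ] H) (Υ : Ω → H →L[ℂ] E) (δ : ℝ) : Prop :=
  0 < δ ∧ ∀ h : H,
    Integrable (fun ξ => ‖Υ ξ h‖ ^ 2) ν ∧
    ∫ ξ, ‖Υ ξ h‖ ^ 2 ∂ν = δ * ‖adjoint K h‖ ^ 2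

section Adjoint

variable {𝕜 E F : Type*} [RCLike 𝕜]
  [NormedAddCommGroup E] [InnerProductSpace 𝕜 E] [CompleteSpace E]
  [NormedAddCommGroup F] [InnerProductSpace 𝕜 F] [CompleteSpace F]

/- By the open mapping theorem each `y` is `T x` with `‖x‖ ≤ C * ‖y‖`; then Cauchy–Schwarz applies
to `⟪y, y⟫ = ⟪y, T x⟫ = ⟪T† y, x⟫`. -/
theorem exists_norm_le_mul_norm_adjoint_of_surjective {T : E →L[𝕜] F}
    (hT : Function.Surjective T) : ∃ C > 0, ∀ y, ‖y‖ ≤ C * ‖adjoint T y‖ := by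
  obtain ⟨C, hC, hpreimage⟩ := T.exists_preimage_norm_le hT
  refine ⟨C, hC, fun y => ?_⟩
  obtain ⟨x, rfl, hx⟩ := hpreimage y
  rcases (norm_nonneg (T x)).eq_or_lt with hzero | hpos
  · rw [← hzero]
    positivity
  · refine le_of_mul_le_mul_right ?_ hpos
    calc ‖T x‖ * ‖T x‖ = RCLike.re (inner 𝕜 (adjoint T (T x)) x) := by
          rw [adjoint_inner_left, inner_self_eq_norm_mul_norm]
      _ ≤ ‖adjoint T (T x)‖ * ‖x‖ := re_inner_le_norm _ _
      _ ≤ ‖adjoint T (T x)‖ * (C * ‖T x‖) := by gcongr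
      _ = C * ‖adjoint T (T x)‖ * ‖T x‖ := by ring

theorem adjoint_apply_adjoint_apply_of_comp_eq_comp {S : E →L[𝕜] E} {R : F →L[𝕜] F}
    {T : E →L[𝕜] F} (h : T ∘L S = R ∘L T) (y : F) :
    adjoint S (adjoint T y) = adjoint T (adjoint R y) := by
  simpa only [adjoint_comp, comp_apply] using DFunLike.congr_fun (congrArg adjoint h) y

end Adjoint

section Frames

variable {Ω H H' E : Type*} [MeasurableSpace Ω]
  [NormedAddCommGroup H] [InnerProductSpace ℂ H] [CompleteSpace H]
  [NormedAddCommGroup H'] [InnerProductSpace ℂ H'] [CompleteSpace H']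
  [NormedAddCommGroup E] [InnerProductSpace ℂ E]
  {ν : Measure Ω} {K : H →L[ℂ] H} {Υ : Ω → H →L[ℂ] E} {A B δ : ℝ}

/- A lower bound need not lie below an upper bound when `K` is small (for instance `K = 0`), so the
upper bound is enlarged to meet the requirement `A ≤ B`. -/
theorem isCKgFrame_max (hA : 0 < A)
    (hint : ∀ h, Integrable (fun ξ => ‖Υ ξ h‖ ^ 2) ν)
    (hlower : ∀ h, A * ‖adjoint K h‖ ^ 2 ≤ ∫ ξ, ‖Υ ξ h‖ ^ 2 ∂ν)
    (hupper : ∀ h, ∫ ξ, ‖Υ ξ h‖ ^ 2 ∂ν ≤ B * ‖h‖ ^ 2) :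
    IsCKgFrame ν K Υ A (max A B) :=
  ⟨hA, le_max_left A B, fun h => ⟨hint h, hlower h, (hupper h).trans <| by
    gcongr
    exact le_max_right A B⟩⟩

theorem IsTightCKgFrame.isCKgFrame (hΥ : IsTightCKgFrame ν K Υ δ) :
    IsCKgFrame ν K Υ δ (max δ (δ * ‖K‖ ^ 2)) := by
  obtain ⟨hδ, hΥ⟩ := hΥ
  refine isCKgFrame_max hδ (fun h => (hΥ h).1) (fun h => (hΥ h).2.ge) fun h => ?_
  calc ∫ ξ, ‖Υ ξ h‖ ^ 2 ∂ν = δ * ‖adjoint K h‖ ^ 2 := (hΥ h).2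
    _ ≤ δ * (‖adjoint K‖ * ‖h‖) ^ 2 := by
        gcongr
        exact (adjoint K).le_opNorm h
    _ = δ * ‖K‖ ^ 2 * ‖h‖ ^ 2 := by
        rw [LinearIsometryEquiv.norm_map, mul_pow, mul_assoc]

theorem IsCKgFrame.comp_adjoint_s2 (hΥ : IsCKgFrame ν K Υ A B) {L : H' →L[ℂ] H'} {Θ : H →L[ℂ] H'}
    (hintertwine : Θ ∘L K = L ∘L Θ) {C : ℝ} (hC : 0 < C)
    (hbelow : ∀ y, ‖y‖ ≤ C * ‖adjoint Θ y‖) :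
    IsCKgFrame ν L (fun ξ => Υ ξ ∘L adjoint Θ) (A / C ^ 2) (max (A / C ^ 2) (B * ‖Θ‖ ^ 2)) := by
  obtain ⟨hA, hAB, hΥ⟩ := hΥ
  have hB : 0 < B := hA.trans_le hAB
  refine isCKgFrame_max (by positivity) (fun h => (hΥ (adjoint Θ h)).1) (fun h => ?_) fun h => ?_
  · calc A / C ^ 2 * ‖adjoint L h‖ ^ 2
        ≤ A / C ^ 2 * (C * ‖adjoint Θ (adjoint L h)‖) ^ 2 := by
          gcongr
          exact hbelow (adjoint L h)
      _ = A * ‖adjoint K (adjoint Θ h)‖ ^ 2 := by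
          rw [adjoint_apply_adjoint_apply_of_comp_eq_comp hintertwine]
          field_simp
      _ ≤ ∫ ξ, ‖Υ ξ (adjoint Θ h)‖ ^ 2 ∂ν := (hΥ (adjoint Θ h)).2.1
  · calc ∫ ξ, ‖Υ ξ (adjoint Θ h)‖ ^ 2 ∂ν ≤ B * ‖adjoint Θ h‖ ^ 2 := (hΥ (adjoint Θ h)).2.2
      _ ≤ B * (‖adjoint Θ‖ * ‖h‖) ^ 2 := by
          gcongr
          exact (adjoint Θ).le_opNorm h
      _ = B * ‖Θ‖ ^ 2 * ‖h‖ ^ 2 := by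
          rw [LinearIsometryEquiv.norm_map, mul_pow, mul_assoc]

theorem stmt2_general {L : H' →L[ℂ] H'} {Θ : H →L[ℂ] H'} (hintertwine : Θ ∘L K = L ∘L Θ)
    (hΥ : IsCKgFrame ν K Υ A B) (hsurj : Function.Surjective Θ) :
    ∃ A' B' : ℝ, IsCKgFrame ν L (fun ξ => Υ ξ ∘L adjoint Θ) A' B' := by
  obtain ⟨C, hC, hbelow⟩ := exists_norm_le_mul_norm_adjoint_of_surjective hsurj
  exact ⟨_, _, hΥ.comp_adjoint_s2 hintertwine hC hbelow⟩

end Frames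

theorem stmt2 {Ω H E : Type*} [MeasurableSpace Ω]
    [NormedAddCommGroup H] [InnerProductSpace ℂ H] [CompleteSpace H]
    [NormedAddCommGroup E] [InnerProductSpace ℂ E]
    (ν : Measure Ω) (K Θ : H →L[ℂ] H) (Υ : Ω → H →L[ℂ] E) (δ : ℝ)
    (hcomm : Θ ∘L K = K ∘L Θ)
    (htight : IsTightCKgFrame ν K Υ δ)
    (hbelow : ∃ m : ℝ, 0 < m ∧ ∀ f : H, m * ‖f‖ ≤ ‖adjoint K f‖)
    (hsurj : Function.Surjective ⇑Θ) :
    ∃ A B : ℝ, IsCKgFrame ν K (fun ξ => (Υ ξ).comp (adjoint Θ)) A B :=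
  stmt2_general hcomm htight.isCKgFrame hsurj
end
end

section
/- Let K and Θ be bounded operators on H with ΘK = KΘ, let {Υ_ξ}_{ξ∈Ω} be a δ-tight continuous K-g-frame for H (δ > 0), and assume K* is bounded below, i.e. there is m > 0 with ‖K* f‖ ≥ m‖f‖ for all f ∈ H. If {Υ_ξ ∘ Θ*}_{ξ∈Ω} is a continuous K-g-frame for H, then Θ is surjective. -/
open MeasureTheory ContinuousLinearMap

noncomputable section

/-!
Combining the lower frame bound of `{Υ_ξ ∘ Θ*}` with the upper bound of `{Υ_ξ}` at the vectors
`Θ* h` gives `‖K* h‖ ≤ c ‖Θ* h‖`. By Douglas' range inclusion lemma the range of `K` then lies in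
that of `Θ`, and the same lemma, comparing `K` with the identity, shows that `K` is surjective.
-/

section RangeInclusion

variable {𝕜 : Type*} [RCLike 𝕜]

theorem exists_strongDual_comp_eq_of_norm_le_seminorm {V W : Type*}
    [AddCommGroup V] [Module 𝕜 V] [AddCommGroup W] [TopologicalSpace W] [Module 𝕜 W]
    [PolynormableSpace 𝕜 W] (T : V →ₗ[𝕜] W) (φ : Module.Dual 𝕜 V) {p : Seminorm 𝕜 W}
    (hp : Continuous p) (hφ : ∀ v, ‖φ v‖ ≤ p (T v)) :
    ∃ ψ : StrongDual 𝕜 W, ∀ v, ψ (T v) = φ v := by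
  have hker : φ ∈ T.ker.dualAnnihilator := by
    refine (Submodule.mem_dualAnnihilator φ).mpr fun v hv => norm_le_zero_iff.mp ?_
    simpa only [LinearMap.mem_ker.mp hv, map_zero] using hφ v
  rw [← LinearMap.range_dualMap_eq_dualAnnihilator_ker] at hker
  obtain ⟨χ, rfl⟩ := hker
  obtain ⟨ψ, hψ, -⟩ := Module.Dual.exists_continuous_extension_of_le_seminorm T.range
    (χ.domRestrict T.range) hp (by rintro ⟨_, v, rfl⟩; exact hφ v)
  exact ⟨ψ, fun v => hψ ⟨T v, v, rfl⟩⟩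

variable {F G H : Type*}
  [NormedAddCommGroup F] [InnerProductSpace 𝕜 F] [CompleteSpace F]
  [NormedAddCommGroup G] [InnerProductSpace 𝕜 G] [CompleteSpace G]
  [NormedAddCommGroup H] [InnerProductSpace 𝕜 H] [CompleteSpace H]

theorem range_le_range_of_norm_adjoint_le {S : F →L[𝕜] H} {T : G →L[𝕜] H} {c : ℝ}
    (hST : ∀ h, ‖adjoint S h‖ ≤ c * ‖adjoint T h‖) : S.range ≤ T.range := by
  rintro _ ⟨x, rfl⟩
  have hbound : ∀ h, ‖inner 𝕜 (S x) h‖ ≤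
      ((‖x‖ * c).toNNReal • normSeminorm 𝕜 G) (adjoint T h) := fun h => calc
    ‖inner 𝕜 (S x) h‖ = ‖inner 𝕜 x (adjoint S h)‖ := by rw [adjoint_inner_right]
    _ ≤ ‖x‖ * ‖adjoint S h‖ := norm_inner_le_norm _ _
    _ ≤ ‖x‖ * (c * ‖adjoint T h‖) := by gcongr; exact hST h
    _ = ‖x‖ * c * ‖adjoint T h‖ := (mul_assoc _ _ _).symm
    _ ≤ (‖x‖ * c).toNNReal * ‖adjoint T h‖ := by gcongr; exact Real.le_coe_toNNReal _
  obtain ⟨ψ, hψ⟩ := exists_strongDual_comp_eq_of_norm_le_seminorm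
    (adjoint T).toLinearMap (innerSL 𝕜 (S x)).toLinearMap
    (continuous_norm.const_smul (‖x‖ * c).toNNReal) hbound
  refine ⟨(InnerProductSpace.toDual 𝕜 G).symm ψ, ext_inner_right 𝕜 fun h => ?_⟩
  calc
    inner 𝕜 (T ((InnerProductSpace.toDual 𝕜 G).symm ψ)) h = ψ (adjoint T h) := by
      rw [← adjoint_inner_right, InnerProductSpace.toDual_symm_apply]
    _ = inner 𝕜 (S x) h := hψ h

theorem surjective_of_adjoint_bounded_below {T : G →L[𝕜] H} {m : ℝ} (hm : 0 < m)
    (hT : ∀ h, m * ‖h‖ ≤ ‖adjoint T h‖) : Function.Surjective T := by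
  have hid : (ContinuousLinearMap.id 𝕜 H).range ≤ T.range :=
    range_le_range_of_norm_adjoint_le (c := m⁻¹) fun h => by
      simpa only [adjoint_id, id_apply, le_inv_mul_iff₀ hm] using hT h
  exact fun y => hid ⟨y, rfl⟩

end RangeInclusion

section Frames

variable {Ω G H E : Type*} [MeasurableSpace Ω]
  [NormedAddCommGroup G] [InnerProductSpace ℂ G]
  [NormedAddCommGroup H] [InnerProductSpace ℂ H] [CompleteSpace H]
  [NormedAddCommGroup E] [InnerProductSpace ℂ E]
  {ν : Measure Ω} {K : H →L[ℂ] H}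

/-- `Υ` is a continuous g-Bessel family with bound `B`: the upper half of the frame inequality.
Integrability is required because the Bochner integral of a non-integrable function is `0`. -/
def IsContinuousGBessel (ν : Measure Ω) (Υ : Ω → G →L[ℂ] E) (B : ℝ) : Prop :=
  ∀ g : G, Integrable (fun ξ => ‖Υ ξ g‖ ^ 2) ν ∧ ∫ ξ, ‖Υ ξ g‖ ^ 2 ∂ν ≤ B * ‖g‖ ^ 2

theorem IsTightCKgFrame.isContinuousGBessel {Υ : Ω → H →L[ℂ] E} {δ : ℝ}
    (hΥ : IsTightCKgFrame ν K Υ δ) : IsContinuousGBessel ν Υ (δ * ‖K‖ ^ 2) := by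
  obtain ⟨hδ, htight⟩ := hΥ
  refine fun h => ⟨(htight h).1, ?_⟩
  have hK : ‖adjoint K h‖ ≤ ‖K‖ * ‖h‖ := by
    simpa only [LinearIsometryEquiv.norm_map] using (adjoint K).le_opNorm h
  calc
    ∫ ξ, ‖Υ ξ h‖ ^ 2 ∂ν = δ * ‖adjoint K h‖ ^ 2 := (htight h).2
    _ ≤ δ * (‖K‖ * ‖h‖) ^ 2 := by gcongr
    _ = δ * ‖K‖ ^ 2 * ‖h‖ ^ 2 := by ring

variable [CompleteSpace G] {Θ : G →L[ℂ] H} {Υ : Ω → G →L[ℂ] E} {A B C : ℝ}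

theorem IsCKgFrame.norm_adjoint_le_of_comp_adjoint
    (hframe : IsCKgFrame ν K (fun ξ => Υ ξ ∘L adjoint Θ) A B)
    (hΥ : IsContinuousGBessel ν Υ C) (h : H) :
    ‖adjoint K h‖ ≤ √(C / A) * ‖adjoint Θ h‖ := by
  obtain ⟨hA, -, hbounds⟩ := hframe
  have hmul : A * ‖adjoint K h‖ ^ 2 ≤ C * ‖adjoint Θ h‖ ^ 2 :=
    (hbounds h).2.1.trans (hΥ (adjoint Θ h)).2
  have hsq : ‖adjoint K h‖ ^ 2 ≤ C / A * ‖adjoint Θ h‖ ^ 2 := by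
    rwa [div_mul_eq_mul_div, le_div_iff₀' hA]
  calc
    ‖adjoint K h‖ ≤ √(C / A * ‖adjoint Θ h‖ ^ 2) := Real.le_sqrt_of_sq_le hsq
    _ = √(C / A) * ‖adjoint Θ h‖ := by
      rw [Real.sqrt_mul' _ (sq_nonneg _), Real.sqrt_sq (norm_nonneg _)]

theorem stmt3_general (hΥ : IsContinuousGBessel ν Υ C)
    (hframe : IsCKgFrame ν K (fun ξ => Υ ξ ∘L adjoint Θ) A B) : K.range ≤ Θ.range :=
  range_le_range_of_norm_adjoint_le (hframe.norm_adjoint_le_of_comp_adjoint hΥ)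

end Frames

theorem stmt3 {Ω H E : Type*} [MeasurableSpace Ω]
    [NormedAddCommGroup H] [InnerProductSpace ℂ H] [CompleteSpace H]
    [NormedAddCommGroup E] [InnerProductSpace ℂ E]
    (ν : Measure Ω) (K Θ : H →L[ℂ] H) (Υ : Ω → H →L[ℂ] E) (δ : ℝ)
    (hcomm : Θ ∘L K = K ∘L Θ)
    (htight : IsTightCKgFrame ν K Υ δ)
    (hbelow : ∃ m : ℝ, 0 < m ∧ ∀ f : H, m * ‖f‖ ≤ ‖adjoint K f‖)
    (hframe : ∃ A B : ℝ, IsCKgFrame ν K (fun ξ => (Υ ξ).comp (adjoint Θ)) A B) :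
    Function.Surjective ⇑Θ := by
  obtain ⟨m, hm, hKm⟩ := hbelow
  obtain ⟨A, B, hΥΘ⟩ := hframe
  have hK : Function.Surjective K := surjective_of_adjoint_bounded_below hm hKm
  exact fun y => stmt3_general htight.isContinuousGBessel hΥΘ (hK y)
end
end

section
/- Let K₁ and K₂ be bounded operators on H and let {Υ_ξ}_{ξ∈Ω} be a δ-tight continuous K₁-g-frame for H (δ > 0). If {Υ_ξ}_{ξ∈Ω} is also a continuous K₂-g-frame for H, then ran(K₂) ⊆ ran(K₁). -/
open MeasureTheory ContinuousLinearMap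

noncomputable section

/-!
Comparing the tight identity with the lower bound of the `K₂`-g-frame gives
`‖K₂* h‖ ≤ c ‖K₁* h‖`, and the inclusion of ranges is then Douglas' lemma: for fixed `x`, the
assignment `K₁* h ↦ ⟪x, K₂* h⟫` is a well-defined bounded functional on `ran K₁*`; extend it by
Hahn–Banach and represent it by a vector `u`, so that `K₁ u = K₂ x`.
-/

theorem exists_strongDual_apply_eq_of_norm_le {𝕜 V W : Type*} [RCLike 𝕜]
    [AddCommGroup V] [Module 𝕜 V] [SeminormedAddCommGroup W] [NormedSpace 𝕜 W]
    (T : V →ₗ[𝕜] W) (φ : V →ₗ[𝕜] 𝕜) {c : ℝ} (hφ : ∀ v, ‖φ v‖ ≤ c * ‖T v‖) :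
    ∃ g : StrongDual 𝕜 W, ∀ v, g (T v) = φ v := by
  obtain ⟨g, hg, -⟩ := exists_extension_norm_eq (LinearMap.range T) (φ.compLeftInverse T)
  refine ⟨g, fun v => ?_⟩
  calc g (T v) = φ.compLeftInverse T ⟨T v, v, rfl⟩ := hg ⟨T v, v, rfl⟩
    _ = φ v := φ.compLeftInverse_apply_of_bdd T ⟨c, hφ⟩ v (T v) rfl

section Adjoint

variable {𝕜 F G H : Type*} [RCLike 𝕜]
  [NormedAddCommGroup F] [InnerProductSpace 𝕜 F] [CompleteSpace F]
  [NormedAddCommGroup G] [InnerProductSpace 𝕜 G] [CompleteSpace G]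
  [NormedAddCommGroup H] [InnerProductSpace 𝕜 H] [CompleteSpace H]

theorem mem_range_of_norm_inner_le_norm_adjoint (T : F →L[𝕜] H) (y : H) {c : ℝ}
    (hy : ∀ h, ‖inner 𝕜 y h‖ ≤ c * ‖adjoint T h‖) : y ∈ Set.range T := by
  obtain ⟨g, hg⟩ := exists_strongDual_apply_eq_of_norm_le
    (adjoint T).toLinearMap (innerSL 𝕜 y).toLinearMap hy
  refine ⟨(InnerProductSpace.toDual 𝕜 F).symm g, ext_inner_right 𝕜 fun h => ?_⟩
  calc inner 𝕜 (T ((InnerProductSpace.toDual 𝕜 F).symm g)) h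
      = inner 𝕜 ((InnerProductSpace.toDual 𝕜 F).symm g) (adjoint T h) :=
        (adjoint_inner_right T _ h).symm
    _ = g (adjoint T h) := InnerProductSpace.toDual_symm_apply
    _ = inner 𝕜 y h := hg h

theorem range_subset_range_of_norm_adjoint_le (S : G →L[𝕜] H) (T : F →L[𝕜] H) {c : ℝ}
    (hST : ∀ h, ‖adjoint S h‖ ≤ c * ‖adjoint T h‖) : Set.range S ⊆ Set.range T := by
  rintro _ ⟨x, rfl⟩
  refine mem_range_of_norm_inner_le_norm_adjoint T (S x) (c := ‖x‖ * c) fun h => ?_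
  calc ‖inner 𝕜 (S x) h‖ = ‖inner 𝕜 x (adjoint S h)‖ := by rw [adjoint_inner_right]
    _ ≤ ‖x‖ * ‖adjoint S h‖ := norm_inner_le_norm _ _
    _ ≤ ‖x‖ * (c * ‖adjoint T h‖) := by gcongr; exact hST h
    _ = ‖x‖ * c * ‖adjoint T h‖ := (mul_assoc _ _ _).symm

end Adjoint

theorem IsTightCKgFrame.norm_adjoint_le {Ω H E : Type*} [MeasurableSpace Ω]
    [NormedAddCommGroup H] [InnerProductSpace ℂ H] [CompleteSpace H]
    [NormedAddCommGroup E] [InnerProductSpace ℂ E]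
    {ν : Measure Ω} {K₁ K₂ : H →L[ℂ] H} {Υ : Ω → H →L[ℂ] E} {δ A B : ℝ}
    (htight : IsTightCKgFrame ν K₁ Υ δ) (hframe : IsCKgFrame ν K₂ Υ A B) (h : H) :
    ‖adjoint K₂ h‖ ≤ √(δ / A) * ‖adjoint K₁ h‖ := by
  obtain ⟨hδ, htight⟩ := htight
  obtain ⟨hA, -, hframe⟩ := hframe
  have hsq : A * ‖adjoint K₂ h‖ ^ 2 ≤ δ * ‖adjoint K₁ h‖ ^ 2 :=
    (hframe h).2.1.trans_eq (htight h).2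
  refine (sq_le_sq₀ (norm_nonneg _) (by positivity)).1 ?_
  calc ‖adjoint K₂ h‖ ^ 2 ≤ δ * ‖adjoint K₁ h‖ ^ 2 / A := (le_div_iff₀' hA).2 hsq
    _ = (√(δ / A) * ‖adjoint K₁ h‖) ^ 2 := by
      rw [mul_pow, Real.sq_sqrt (by positivity), div_mul_eq_mul_div]

theorem stmt9 {Ω H E : Type*} [MeasurableSpace Ω]
    [NormedAddCommGroup H] [InnerProductSpace ℂ H] [CompleteSpace H]
    [NormedAddCommGroup E] [InnerProductSpace ℂ E]
    (ν : Measure Ω) (K1 K2 : H →L[ℂ] H) (Υ : Ω → H →L[ℂ] E) (δ : ℝ)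
    (htight : IsTightCKgFrame ν K1 Υ δ)
    (hframe : ∃ A B : ℝ, IsCKgFrame ν K2 Υ A B) :
    Set.range ⇑K2 ⊆ Set.range ⇑K1 := by
  obtain ⟨A, B, hframe⟩ := hframe
  exact range_subset_range_of_norm_adjoint_le K2 K1 (htight.norm_adjoint_le hframe)
end
end
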